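/- Let {ψ_n}_{n≥1} be any sequence of measurable (possibly randomized) tests ψ_n : D^n → [0,1] applied to the full data (X_i, Y_i(1), Y_i(0), T_i)_{i=1}^n, i.i.d. with law P under P. Then sup_{Q ∈ E} limsup_{n→∞} E_Q[ψ_n] ≤ limsup_{n→∞} sup_{P ∈ P_SI} E_P[ψ_n]. -/

import Mathlib

/-!
STATEMENT 0 (no-free-lunch for conditional independence testing, finite sample):
If a (possibly randomized) test `ψ : D^n → [0,1]` on the full data
`(X, Y(1), Y(0), T)` has level `α` over the strong-ignorability class `P_SI`,
then it has level `α` over the whole class `E`.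
-/

open MeasureTheory ProbabilityTheory Filter

noncomputable section

/-- The full-data sample space `D = ℝ^p × ℝ² × {0,1}`. -/
abbrev FullData (p : ℕ) : Type := (Fin p → ℝ) × ℝ × ℝ × Bool

/-- Covariate coordinate. -/
def Xc {p : ℕ} (ω : FullData p) : Fin p → ℝ := ω.1

/-- Treated potential outcome coordinate `Y(1)`. -/
def Y1c {p : ℕ} (ω : FullData p) : ℝ := ω.2.1

/-- Control potential outcome coordinate `Y(0)`. -/
def Y0c {p : ℕ} (ω : FullData p) : ℝ := ω.2.2.1

/-- Treatment coordinate `T`. -/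
def Tc {p : ℕ} (ω : FullData p) : Bool := ω.2.2.2

lemma measurable_Xc {p : ℕ} : Measurable (Xc (p := p)) := measurable_fst

/-- The σ-algebra generated by the covariates `X`. -/
def mX (p : ℕ) : MeasurableSpace (FullData p) :=
  MeasurableSpace.comap Xc inferInstance

lemma mX_le (p : ℕ) : mX p ≤ (inferInstance : MeasurableSpace (FullData p)) := measurable_Xc.comap_le

/-- The class `E`: distributions of `(X, Y(1), Y(0), T)` such that at least one coordinate
of `X` has a law absolutely continuous w.r.t. Lebesgue measure, and the laws of `Y(1)` and
`Y(0)` are atomless (continuous). -/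
def memE {p : ℕ} (P : ProbabilityMeasure (FullData p)) : Prop :=
  (∃ j : Fin p,
    ((P : Measure (FullData p)).map (fun ω => Xc ω j)).AbsolutelyContinuous
      (volume : Measure ℝ)) ∧
  (∀ y : ℝ, ((P : Measure (FullData p)).map Y1c) {y} = 0) ∧
  (∀ y : ℝ, ((P : Measure (FullData p)).map Y0c) {y} = 0)

/-- The strong-ignorability class `P_SI ⊆ E`: `(Y(1), Y(0)) ⫫ T | X`. -/
def memPSI {p : ℕ} (P : ProbabilityMeasure (FullData p)) : Prop :=
  memE P ∧
    CondIndepFun (mX p) (mX_le p) (fun ω => (Y1c ω, Y0c ω)) Tc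
      (P : Measure (FullData p))

/-- Expected value `E_P[ψ_n]` of a test `ψ_n : D^n → [0,1]` when the `n` data points are
i.i.d. with law `P`, i.e. the integral of `ψ_n` against the `n`-fold product measure. -/
def testExp {p : ℕ} (n : ℕ) (ψ : (Fin n → FullData p) → ℝ)
    (P : ProbabilityMeasure (FullData p)) : ℝ :=
  ∫ x, ψ x ∂(Measure.pi fun _ : Fin n => (P : Measure (FullData p)))


open scoped ENNReal

section StratifiedReweighting

variable {Ω κ : Type*}

/-- Existence of the conditional probabilities `q k b` of `T = b` given the cell `c = k`,
with an arbitrary convention on null cells. -/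
lemma exists_cell_proportions [MeasurableSpace Ω] (Q : Measure Ω) [IsFiniteMeasure Q]
    {c : Ω → κ} {T : Ω → Bool} (hT : Measurable T) :
    ∃ q : κ → Bool → ℝ≥0∞, (∀ k, ∑ b, q k b = 1) ∧
      ∀ k b, Q (c ⁻¹' {k} ∩ T ⁻¹' {b}) = q k b * Q (c ⁻¹' {k}) := by
  refine ⟨fun k b => if Q (c ⁻¹' {k}) = 0 then (if b then 1 else 0)
    else Q (c ⁻¹' {k} ∩ T ⁻¹' {b}) / Q (c ⁻¹' {k}), fun k => ?_, fun k b => ?_⟩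
  · by_cases h : Q (c ⁻¹' {k}) = 0
    · simp [h]
    · have hsplit : Q (c ⁻¹' {k} ∩ T ⁻¹' {true}) + Q (c ⁻¹' {k} ∩ T ⁻¹' {false})
          = Q (c ⁻¹' {k}) := by
        have hcompl : (T ⁻¹' {true})ᶜ = T ⁻¹' {false} := by ext; simp
        rw [← hcompl, ← Set.sdiff_eq]
        exact measure_inter_add_sdiff _ (hT (measurableSet_singleton true))
      simp only [h, if_false, Fintype.sum_bool]
      rw [← ENNReal.add_div, hsplit, ENNReal.div_self h (measure_ne_top _ _)]
  · by_cases h : Q (c ⁻¹' {k}) = 0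
    · simp only [h, mul_zero]
      exact measure_mono_null Set.inter_subset_left h
    · simp only [h, if_false]
      exact (ENNReal.div_mul_cancel h (measure_ne_top _ _)).symm

/-- The density which forces the treatment to be the function `f` of the cell, while preserving
cell probabilities. -/
def cellDensity (c : Ω → κ) (T : Ω → Bool) (q : κ → Bool → ℝ≥0∞) (f : κ → Bool) (ω : Ω) : ℝ≥0∞ :=
  if T ω = f (c ω) then (q (c ω) (f (c ω)))⁻¹ else 0

variable {c : Ω → κ} {T : Ω → Bool} {q : κ → Bool → ℝ≥0∞}

lemma cellDensity_eq_sum [Fintype κ] (f : κ → Bool) (ω : Ω) :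
    cellDensity c T q f ω =
      ∑ k, (c ⁻¹' {k} ∩ T ⁻¹' {f k}).indicator (fun _ => (q k (f k))⁻¹) ω := by
  rw [Finset.sum_eq_single (c ω)]
  · by_cases h : T ω = f (c ω) <;> simp [cellDensity, Set.indicator, h]
  · intro k _ hk
    simp [Set.indicator, Ne.symm hk]
  · simp

section Measurability

variable [MeasurableSpace Ω] [Fintype κ]

lemma measurable_cellDensity [MeasurableSpace κ] [MeasurableSingletonClass κ]
    (hc : Measurable c) (hT : Measurable T) (f : κ → Bool) :
    Measurable (cellDensity c T q f) := by
  have h : cellDensity c T q f = fun ω =>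
      ∑ k, (c ⁻¹' {k} ∩ T ⁻¹' {f k}).indicator (fun _ => (q k (f k))⁻¹) ω :=
    funext (cellDensity_eq_sum f)
  rw [h]
  exact Finset.measurable_sum _ fun k _ => measurable_const.indicator
    ((hc (measurableSet_singleton k)).inter (hT (measurableSet_singleton _)))

lemma lintegral_cellDensity [MeasurableSpace κ] [MeasurableSingletonClass κ] {Q : Measure Ω}
    [IsProbabilityMeasure Q] (hc : Measurable c) (hT : Measurable T) (hsum : ∀ k, ∑ b, q k b = 1)
    (hQ : ∀ k b, Q (c ⁻¹' {k} ∩ T ⁻¹' {b}) = q k b * Q (c ⁻¹' {k}))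
    {f : κ → Bool} (hf : ∀ k, q k (f k) ≠ 0) :
    ∫⁻ ω, cellDensity c T q f ω ∂Q = 1 := by
  have hset : ∀ k, MeasurableSet (c ⁻¹' {k} ∩ T ⁻¹' {f k}) := fun k =>
    (hc (measurableSet_singleton k)).inter (hT (measurableSet_singleton _))
  have htop : ∀ k, q k (f k) ≠ ∞ := fun k =>
    ((Finset.single_le_sum (f := q k) (fun _ _ => zero_le) (Finset.mem_univ (f k))).trans
      (hsum k).le).trans_lt ENNReal.one_lt_top |>.ne
  simp_rw [cellDensity_eq_sum]
  rw [lintegral_finsetSum _ fun k _ => measurable_const.indicator (hset k)]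
  simp_rw [lintegral_indicator_const (hset _), hQ, ← mul_assoc,
    ENNReal.inv_mul_cancel (hf _) (htop _), one_mul]
  rw [sum_measure_preimage_singleton _ fun k _ => hc (measurableSet_singleton k)]
  simp

lemma ae_cell_proportion_ne_zero {Q : Measure Ω}
    (hQ : ∀ k b, Q (c ⁻¹' {k} ∩ T ⁻¹' {b}) = q k b * Q (c ⁻¹' {k})) :
    ∀ᵐ ω ∂Q, q (c ω) (T ω) ≠ 0 := by
  have h : ∀ k b, ∀ᵐ ω ∂Q, q k b = 0 → ¬ (c ω = k ∧ T ω = b) := by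
    intro k b
    by_cases hq : q k b = 0
    · rw [ae_iff]
      refine measure_mono_null (t := c ⁻¹' {k} ∩ T ⁻¹' {b}) ?_ (by rw [hQ, hq, zero_mul])
      intro ω hω
      simpa [hq] using hω
    · exact .of_forall fun _ h => absurd h hq
  filter_upwards [ae_all_iff.2 fun k => ae_all_iff.2 (h k)] with ω hω h0
  exact hω _ _ h0 ⟨rfl, rfl⟩

end Measurability

/-- Averaging the product densities over independent random treatment assignments `f k ∼ q k`
gives one at samples whose cells are pairwise distinct. -/
lemma sum_prod_cellDensity [Fintype κ] [DecidableEq κ] {ι : Type*} [Fintype ι]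
    (hsum : ∀ k, ∑ b, q k b = 1) (x : ι → Ω) (hx : Function.Injective fun i => c (x i))
    (hq : ∀ i, q (c (x i)) (T (x i)) ≠ 0) :
    ∑ f : κ → Bool, (∏ k, q k (f k)) * ∏ i, cellDensity c T q f (x i) = 1 := by
  classical
  let h : ι → Bool → ℝ≥0∞ := fun i b => if T (x i) = b then (q (c (x i)) b)⁻¹ else 0
  let H : κ → Bool → ℝ≥0∞ := fun k b => ∏ i, if c (x i) = k then h i b else 1
  have hswap : ∀ f : κ → Bool, ∏ i, cellDensity c T q f (x i) = ∏ k, H k (f k) := by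
    intro f
    rw [Finset.prod_comm]
    refine Finset.prod_congr rfl fun i _ => ?_
    simp [h, cellDensity]
  simp_rw [hswap, ← Finset.prod_mul_distrib]
  have hdist := Finset.sum_prod_piFinset (Finset.univ : Finset Bool) fun k b => q k b * H k b
  rw [Fintype.piFinset_univ] at hdist
  rw [hdist]
  refine Finset.prod_eq_one fun k _ => ?_
  by_cases hk : ∃ i, c (x i) = k
  · obtain ⟨i, rfl⟩ := hk
    have hH : ∀ b, H (c (x i)) b = h i b := by
      intro b
      simp only [H]
      rw [Finset.prod_eq_single i]
      · simp
      · intro j _ hj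
        rw [if_neg fun e => hj (hx e)]
      · simp
    have htop : q (c (x i)) (T (x i)) ≠ ∞ :=
      ((Finset.single_le_sum (f := q (c (x i))) (fun _ _ => zero_le)
        (Finset.mem_univ (T (x i)))).trans (hsum _).le).trans_lt ENNReal.one_lt_top |>.ne
    simp only [hH, h, mul_ite, mul_zero, Finset.sum_ite_eq, Finset.mem_univ, if_true]
    exact ENNReal.mul_inv_cancel (hq i) htop
  · push Not at hk
    simpa [H, hk] using hsum k

end StratifiedReweighting

lemma pi_withDensity_eq {ι Ω : Type*} [Fintype ι] [MeasurableSpace Ω] (Q : Measure Ω)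
    [IsProbabilityMeasure Q] {g : Ω → ℝ≥0∞} (hg : Measurable g)
    [SigmaFinite (Q.withDensity g)] :
    Measure.pi (fun _ : ι => Q.withDensity g) =
      (Measure.pi fun _ : ι => Q).withDensity fun x => ∏ i, g (x i) := by
  refine Measure.pi_eq fun s hs => ?_
  rw [withDensity_apply _ (MeasurableSet.univ_pi hs), ← lintegral_indicator (.univ_pi hs)]
  have hind : ∀ x : ι → Ω, (Set.univ.pi s).indicator (fun x => ∏ i, g (x i)) x =
      ∏ i, (s i).indicator g (x i) := by
    intro x
    by_cases hx : x ∈ Set.univ.pi s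
    · rw [Set.indicator_of_mem hx]
      exact Finset.prod_congr rfl fun i _ => (Set.indicator_of_mem (hx i trivial) _).symm
    · rw [Set.indicator_of_notMem hx]
      simp only [Set.mem_univ_pi, not_forall] at hx
      obtain ⟨i, hi⟩ := hx
      exact (Finset.prod_eq_zero (Finset.mem_univ i) (Set.indicator_of_notMem hi _)).symm
  have hmeas : ∀ i, Measurable ((s i).indicator g) := fun i => hg.indicator (hs i)
  simp_rw [hind]
  rw [lintegral_prod_eq_prod_lintegral_of_indepFun Finset.univ
    (fun i (x : ι → Ω) => (s i).indicator g (x i))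
    (iIndepFun_pi fun i => (hmeas i).aemeasurable) fun i => (hmeas i).comp (measurable_pi_apply i)]
  refine Finset.prod_congr rfl fun i _ => ?_
  rw [withDensity_apply _ (hs i), ← lintegral_indicator (hs i)]
  exact (measurePreserving_eval (fun _ : ι => Q) i).lintegral_comp (hmeas i)

lemma condIndepFun_congr_right {Ω β γ : Type*} {m m₀ : MeasurableSpace Ω} [StandardBorelSpace Ω]
    {hm : m ≤ m₀} {μ : Measure Ω} [IsFiniteMeasure μ] [MeasurableSpace β] [MeasurableSpace γ]
    {f : Ω → β} {g g' : Ω → γ} (hf : Measurable f) (hg : Measurable g) (hg' : Measurable g')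
    (h : g =ᵐ[μ] g') (hfg : CondIndepFun m hm f g μ) : CondIndepFun m hm f g' μ := by
  rw [condIndepFun_iff_condExp_inter_preimage_eq_mul hf hg] at hfg
  rw [condIndepFun_iff_condExp_inter_preimage_eq_mul hf hg']
  intro s t hs ht
  have hset : g ⁻¹' t =ᵐ[μ] g' ⁻¹' t := by
    filter_upwards [h] with ω hω
    exact congrArg (· ∈ t) hω
  have h₁ := condExp_congr_ae (m := m)
    (indicator_ae_eq_of_ae_eq_set (f := fun _ : Ω => (1 : ℝ)) hset)
  have h₂ := condExp_congr_ae (m := m) (indicator_ae_eq_of_ae_eq_set (f := fun _ : Ω => (1 : ℝ))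
    ((ae_eq_refl (f ⁻¹' s)).inter hset))
  filter_upwards [hfg s t hs ht, h₁, h₂] with ω h₃ h₁ h₂
  rw [← h₂, h₃, h₁]

/-- In an i.i.d. sample, an atomless variable almost surely takes pairwise distinct values. -/
lemma ae_injective_sample {ι Ω β : Type*} [Fintype ι] [MeasurableSpace Ω] [MeasurableSpace β]
    [MeasurableEq β] (Q : Measure Ω) [IsProbabilityMeasure Q]
    {X : Ω → β} (hX : Measurable X) (h0 : ∀ a, Q (X ⁻¹' {a}) = 0) :
    ∀ᵐ x ∂(Measure.pi fun _ : ι => Q), Function.Injective fun i => X (x i) := by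
  have hpair : ∀ i j, i ≠ j → ∀ᵐ x ∂(Measure.pi fun _ : ι => Q), X (x i) ≠ X (x j) := by
    intro i j hij
    have hXi : ∀ i, Measurable fun x : ι → Ω => X (x i) := fun i =>
      hX.comp (measurable_pi_apply i)
    have hind : iIndepFun (fun i (x : ι → Ω) => X (x i)) (Measure.pi fun _ : ι => Q) :=
      iIndepFun_pi fun _ => hX.aemeasurable
    have hmap := (indepFun_iff_map_prod_eq_prod_map_map (hXi i).aemeasurable
      (hXi j).aemeasurable).1 (hind.indepFun hij)
    have hdiag : MeasurableSet (Set.diagonal β) := measurableSet_diagonal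
    have hnull : (Measure.pi fun _ : ι => Q)
        ((fun x : ι → Ω => (X (x i), X (x j))) ⁻¹' Set.diagonal β) = 0 := by
      rw [← Measure.map_apply ((hXi i).prodMk (hXi j)) hdiag, hmap, Measure.measure_prod_null hdiag]
      refine .of_forall fun a => ?_
      have : Prod.mk a ⁻¹' Set.diagonal β = {a} := by ext; simp [eq_comm]
      change Measure.map _ _ (Prod.mk a ⁻¹' Set.diagonal β) = 0
      rw [this, Measure.map_apply (hXi j) (measurableSet_singleton a)]
      exact Measure.pi_eval_preimage_null (fun _ : ι => Q) (i := j) (h0 a)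
    rw [ae_iff]
    simpa [Set.preimage] using hnull
  have hall := ae_all_iff.2 fun i => ae_all_iff.2 fun j => ae_all_iff.2 (hpair i j)
  filter_upwards [hall] with x hx i j hij
  by_contra hne
  exact hx i j hne hij

lemma measurable_Tc {p : ℕ} : Measurable (Tc (p := p)) :=
  measurable_snd.comp (measurable_snd.comp measurable_snd)

lemma measurable_Y1c {p : ℕ} : Measurable (Y1c (p := p)) :=
  measurable_fst.comp measurable_snd

lemma measurable_Y0c {p : ℕ} : Measurable (Y0c (p := p)) :=
  measurable_fst.comp (measurable_snd.comp measurable_snd)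

lemma memE.of_absolutelyContinuous {p : ℕ} {P Q : ProbabilityMeasure (FullData p)} (hQ : memE Q)
    (hPQ : (P : Measure (FullData p)) ≪ Q) : memE P := by
  obtain ⟨⟨j, hj⟩, h1, h0⟩ := hQ
  exact ⟨⟨j, (hPQ.map ((measurable_pi_apply j).comp measurable_Xc)).trans hj⟩,
    fun y => hPQ.map measurable_Y1c (h1 y), fun y => hPQ.map measurable_Y0c (h0 y)⟩

lemma memE.measure_covariate_eq_zero {p : ℕ} {Q : ProbabilityMeasure (FullData p)} (hQ : memE Q)
    (a : Fin p → ℝ) : (Q : Measure (FullData p)) (Xc ⁻¹' {a}) = 0 := by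
  obtain ⟨⟨j, hj⟩, -, -⟩ := hQ
  have h := hj (Real.volume_singleton (a := a j))
  have hXj : Measurable fun ω : FullData p => Xc ω j :=
    (measurable_pi_apply j).comp measurable_Xc
  rw [Measure.map_apply hXj (measurableSet_singleton _)] at h
  refine measure_mono_null ?_ h
  rintro ω rfl
  rfl

/-- If the treatment is almost surely a function of the covariates, strong ignorability holds. -/
lemma memPSI_of_treatment_ae_eq {p : ℕ} {P : ProbabilityMeasure (FullData p)} (hP : memE P)
    {t : (Fin p → ℝ) → Bool} (ht : Measurable t)
    (h : ∀ᵐ ω ∂(P : Measure (FullData p)), Tc ω = t (Xc ω)) : memPSI P := by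
  have htX : Measurable[mX p] fun ω : FullData p => t (Xc ω) :=
    ht.comp (comap_measurable (Xc (p := p)))
  have hY : Measurable fun ω : FullData p => (Y1c ω, Y0c ω) :=
    measurable_Y1c.prodMk measurable_Y0c
  refine ⟨hP, condIndepFun_congr_right hY (ht.comp measurable_Xc) measurable_Tc ?_
    (condIndepFun_of_measurable_right hY htX)⟩
  filter_upwards [h] with ω hω using hω.symm

/-- A bound valid for every strongly ignorable law transfers to every law in `E`, on the samples
whose covariates fall in pairwise distinct cells of a finite partition. -/
lemma setLIntegral_distinct_cells_le {p n : ℕ} {κ : Type*} [Fintype κ] [MeasurableSpace κ]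
    [MeasurableSingletonClass κ] {cell : (Fin p → ℝ) → κ} (hcell : Measurable cell)
    {Q : ProbabilityMeasure (FullData p)} (hQ : memE Q)
    {Φ : (Fin n → FullData p) → ℝ≥0∞} (hΦ : Measurable Φ) {S : ℝ≥0∞}
    (hS : ∀ P : ProbabilityMeasure (FullData p), memPSI P →
      ∫⁻ x, Φ x ∂(Measure.pi fun _ : Fin n => (P : Measure (FullData p))) ≤ S) :
    ∫⁻ x in {x | Function.Injective fun i => cell (Xc (x i))}, Φ x
      ∂(Measure.pi fun _ : Fin n => (Q : Measure (FullData p))) ≤ S := by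
  classical
  set c : FullData p → κ := fun ω => cell (Xc ω)
  have hc : Measurable c := hcell.comp measurable_Xc
  have hD : MeasurableSet {x : Fin n → FullData p | Function.Injective fun i => c (x i)} :=
    (measurable_pi_lambda (fun (x : Fin n → FullData p) i => c (x i)) fun i =>
      hc.comp (measurable_pi_apply i)) (Set.toFinite {y | Function.Injective y}).measurableSet
  obtain ⟨q, hsum, hq⟩ := exists_cell_proportions (Q : Measure (FullData p)) (c := c)
    measurable_Tc
  set g : (κ → Bool) → FullData p → ℝ≥0∞ := cellDensity c Tc q
  have hgm : ∀ f, Measurable (g f) := measurable_cellDensity hc measurable_Tc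
  have hprod : ∀ f, Measurable fun x : Fin n → FullData p => ∏ i, g f (x i) := fun f =>
    Finset.measurable_fun_prod _ fun i _ => (hgm f).comp (measurable_pi_apply i)
  have hint : ∀ f, Measurable fun x : Fin n → FullData p => (∏ i, g f (x i)) * Φ x := fun f =>
    (hprod f).mul hΦ
  have hbound : ∀ f : κ → Bool, (∀ k, q k (f k) ≠ 0) →
      ∫⁻ x, (∏ i, g f (x i)) * Φ x
        ∂(Measure.pi fun _ : Fin n => (Q : Measure (FullData p))) ≤ S := by
    intro f hf
    have hprob : IsProbabilityMeasure ((Q : Measure (FullData p)).withDensity (g f)) :=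
      ⟨by rw [withDensity_apply _ .univ, setLIntegral_univ,
        lintegral_cellDensity hc measurable_Tc hsum hq hf]⟩
    have hac := withDensity_absolutelyContinuous (Q : Measure (FullData p)) (g f)
    have hmem : memPSI ⟨(Q : Measure (FullData p)).withDensity (g f), hprob⟩ := by
      refine memPSI_of_treatment_ae_eq (hQ.of_absolutelyContinuous hac)
        ((measurable_of_finite f).comp hcell) ?_
      change ∀ᵐ ω ∂((Q : Measure (FullData p)).withDensity (g f)), Tc ω = f (c ω)
      rw [ae_withDensity_iff (hgm f)]
      refine .of_forall fun ω hω => ?_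
      by_contra hne
      exact hω (if_neg hne)
    have hle := hS _ hmem
    rw [ProbabilityMeasure.coe_mk, pi_withDensity_eq _ (hgm f),
      lintegral_withDensity_eq_lintegral_mul _ (hprod f) hΦ] at hle
    exact hle
  have hne : ∀ᵐ x ∂(Measure.pi fun _ : Fin n => (Q : Measure (FullData p))),
      ∀ i, q (c (x i)) (Tc (x i)) ≠ 0 :=
    ae_all_iff.2 fun i => (Measure.tendsto_eval_ae_ae
      (μ := fun _ : Fin n => (Q : Measure (FullData p))) (i := i)).eventually
      (ae_cell_proportion_ne_zero hq)
  calc ∫⁻ x in {x | Function.Injective fun i => c (x i)}, Φ x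
        ∂(Measure.pi fun _ : Fin n => (Q : Measure (FullData p)))
      = ∫⁻ x in {x | Function.Injective fun i => c (x i)},
          ∑ f : κ → Bool, (∏ k, q k (f k)) * ((∏ i, g f (x i)) * Φ x)
          ∂(Measure.pi fun _ : Fin n => (Q : Measure (FullData p))) := by
        refine setLIntegral_congr_fun_ae hD ?_
        filter_upwards [hne] with x hx hinj
        simp_rw [← mul_assoc]
        rw [← Finset.sum_mul, sum_prod_cellDensity hsum x hinj hx, one_mul]
    _ ≤ ∫⁻ x, ∑ f : κ → Bool, (∏ k, q k (f k)) * ((∏ i, g f (x i)) * Φ x)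
          ∂(Measure.pi fun _ : Fin n => (Q : Measure (FullData p))) := setLIntegral_le_lintegral _ _
    _ = ∑ f : κ → Bool, (∏ k, q k (f k)) * ∫⁻ x, (∏ i, g f (x i)) * Φ x
          ∂(Measure.pi fun _ : Fin n => (Q : Measure (FullData p))) := by
        rw [lintegral_finsetSum _ fun f _ => (hint f).const_mul _]
        exact Finset.sum_congr rfl fun f _ => lintegral_const_mul _ (hint f)
    _ ≤ ∑ f : κ → Bool, (∏ k, q k (f k)) * S := by
        refine Finset.sum_le_sum fun f _ => ?_
        by_cases hf : ∀ k, q k (f k) ≠ 0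
        · gcongr
          exact hbound f hf
        · push Not at hf
          obtain ⟨k, hk⟩ := hf
          have hweight : ∏ k, q k (f k) = 0 := Finset.prod_eq_zero (Finset.mem_univ k) hk
          simp [hweight]
    _ = S := by
        have hdist := Finset.sum_prod_piFinset (Finset.univ : Finset Bool) q
        rw [Fintype.piFinset_univ] at hdist
        rw [← Finset.sum_mul, hdist, Finset.prod_eq_one fun k _ => hsum k, one_mul]

/-- A bound valid for every strongly ignorable law transfers to every law in `E`. -/
lemma lintegral_sample_le_of_forall_memPSI {p n : ℕ}
    {Q : ProbabilityMeasure (FullData p)} (hQ : memE Q)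
    {Φ : (Fin n → FullData p) → ℝ≥0∞} (hΦ : Measurable Φ) {S : ℝ≥0∞}
    (hS : ∀ P : ProbabilityMeasure (FullData p), memPSI P →
      ∫⁻ x, Φ x ∂(Measure.pi fun _ : Fin n => (P : Measure (FullData p))) ≤ S) :
    ∫⁻ x, Φ x ∂(Measure.pi fun _ : Fin n => (Q : Measure (FullData p))) ≤ S := by
  let code := MeasurableSpace.mapNatBool (Fin p → ℝ)
  let cell : (N : ℕ) → (Fin p → ℝ) → Fin N → Bool := fun N a k => code a k
  have hcell : ∀ N, Measurable (cell N) := fun N => measurable_pi_lambda _ fun k =>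
    (measurable_pi_apply (k : ℕ)).comp (MeasurableSpace.measurable_mapNatBool (Fin p → ℝ))
  let D : ℕ → Set (Fin n → FullData p) := fun N =>
    {x | Function.Injective fun i => cell N (Xc (x i))}
  have hD : Monotone D := by
    intro N M hNM x hx i j hij
    refine hx (funext fun k => ?_)
    exact congrFun hij (Fin.castLE hNM k)
  have hmem : ∀ᵐ x ∂(Measure.pi fun _ : Fin n => (Q : Measure (FullData p))), x ∈ ⋃ N, D N := by
    filter_upwards [ae_injective_sample (ι := Fin n) (Q : Measure (FullData p)) measurable_Xc
      hQ.measure_covariate_eq_zero] with x hx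
    have hsep : ∀ ij : Fin n × Fin n, ∃ m, ij.1 ≠ ij.2 →
        code (Xc (x ij.1)) m ≠ code (Xc (x ij.2)) m := by
      intro ij
      by_cases hij : ij.1 = ij.2
      · exact ⟨0, fun h => absurd hij h⟩
      · have hcode : code (Xc (x ij.1)) ≠ code (Xc (x ij.2)) := fun h =>
          hij (hx (MeasurableSpace.injective_mapNatBool (Fin p → ℝ) h))
        obtain ⟨m, hm⟩ := Function.ne_iff.1 hcode
        exact ⟨m, fun _ => hm⟩
    choose m hm using hsep
    obtain ⟨M, hM⟩ := Finite.exists_le m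
    refine Set.mem_iUnion.2 ⟨M + 1, fun i j hij => ?_⟩
    by_contra hne
    exact hm (i, j) hne (congrFun hij ⟨m (i, j), Nat.lt_succ_of_le (hM (i, j))⟩)
  rw [← Measure.restrict_eq_self_of_ae_mem hmem,
    setLIntegral_iUnion_of_directed _ hD.directed_le]
  exact iSup_le fun N => setLIntegral_distinct_cells_le (hcell N) hQ hΦ hS

lemma ofReal_testExp {p n : ℕ} {ψ : (Fin n → FullData p) → ℝ} (hψ : Measurable ψ)
    (h01 : ∀ x, ψ x ∈ Set.Icc (0 : ℝ) 1) (P : ProbabilityMeasure (FullData p)) :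
    ENNReal.ofReal (testExp n ψ P) =
      ∫⁻ x, ENNReal.ofReal (ψ x) ∂(Measure.pi fun _ : Fin n => (P : Measure (FullData p))) :=
  ofReal_integral_eq_lintegral_ofReal
    (.of_mem_Icc 0 1 hψ.aemeasurable (.of_forall h01)) (.of_forall fun x => (h01 x).1)

lemma testExp_mem_Icc {p n : ℕ} {ψ : (Fin n → FullData p) → ℝ}
    (h01 : ∀ x, ψ x ∈ Set.Icc (0 : ℝ) 1) (P : ProbabilityMeasure (FullData p)) :
    testExp n ψ P ∈ Set.Icc (0 : ℝ) 1 := by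
  refine ⟨integral_nonneg fun x => (h01 x).1, ?_⟩
  refine (integral_mono_of_nonneg (.of_forall fun x => (h01 x).1) (integrable_const (1 : ℝ))
    (.of_forall fun x => (h01 x).2)).trans ?_
  simp

lemma bddAbove_range_testExp {p n : ℕ} {ψ : (Fin n → FullData p) → ℝ}
    (h01 : ∀ x, ψ x ∈ Set.Icc (0 : ℝ) 1) :
    BddAbove (Set.range fun P : {P : ProbabilityMeasure (FullData p) // memPSI P} =>
      testExp n ψ P.1) :=
  ⟨1, by rintro _ ⟨P, rfl⟩; exact (testExp_mem_Icc h01 P.1).2⟩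

/-- Finite-sample no-free-lunch: the size of a test over `E` does not exceed its size over the
strong-ignorability class. -/
lemma testExp_le_iSup_memPSI {p n : ℕ} {ψ : (Fin n → FullData p) → ℝ} (hψ : Measurable ψ)
    (h01 : ∀ x, ψ x ∈ Set.Icc (0 : ℝ) 1) {Q : ProbabilityMeasure (FullData p)} (hQ : memE Q) :
    testExp n ψ Q ≤ ⨆ P : {P : ProbabilityMeasure (FullData p) // memPSI P}, testExp n ψ P.1 := by
  have h0 : 0 ≤ ⨆ P : {P : ProbabilityMeasure (FullData p) // memPSI P}, testExp n ψ P.1 :=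
    Real.iSup_nonneg fun P => (testExp_mem_Icc h01 P.1).1
  rw [← ENNReal.ofReal_le_ofReal_iff h0, ofReal_testExp hψ h01]
  refine lintegral_sample_le_of_forall_memPSI hQ hψ.ennreal_ofReal fun P hP => ?_
  rw [← ofReal_testExp hψ h01]
  exact ENNReal.ofReal_le_ofReal (le_ciSup (bddAbove_range_testExp h01) ⟨P, hP⟩)

/-- For any sequence of measurable randomized tests `ψ_n : D^n → [0,1]`,
`sup_{Q ∈ E} limsup_{n→∞} E_Q[ψ_n] ≤ limsup_{n→∞} sup_{P ∈ P_SI} E_P[ψ_n]`. -/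
theorem no_free_lunch_asymptotic {p : ℕ}
    (ψ : (n : ℕ) → (Fin n → FullData p) → ℝ)
    (hψ_meas : ∀ n, Measurable (ψ n))
    (hψ_range : ∀ n x, ψ n x ∈ Set.Icc (0 : ℝ) 1) :
    ∀ Q : ProbabilityMeasure (FullData p), memE Q →
      Filter.limsup (fun n => testExp n (ψ n) Q) Filter.atTop ≤
        Filter.limsup
          (fun n => ⨆ P : {P : ProbabilityMeasure (FullData p) // memPSI P},
            testExp n (ψ n) P.1) Filter.atTop := by
  intro Q hQ
  refine limsup_le_limsup (.of_forall fun n => testExp_le_iSup_memPSI (hψ_meas n) (hψ_range n) hQ)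
    ?_ ?_
  · exact (isBoundedUnder_of ⟨0, fun n =>
      (testExp_mem_Icc (hψ_range n) Q).1⟩ : IsBoundedUnder (· ≥ ·) atTop _).isCoboundedUnder_le
  · exact isBoundedUnder_of ⟨1, fun n =>
      Real.iSup_le (fun P => (testExp_mem_Icc (hψ_range n) P.1).2) zero_le_one⟩

end
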